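/- With weights w_n = ((n−1)!)^α where 1/α = K is a positive integer and 0 < α < 1, the number X_{K+1,N} of vertices of degree K+1 in T_N converges in distribution to Poisson((K!)^α) as N → ∞. -/

import Mathlib

open Filter

/-- Rooted planar trees (the tree hanging from the vertex `s` next to the root `r`;
the full tree of the paper with `N` edges corresponds to a `PTree` with `N` vertices,
plus the extra root `r` of degree 1 attached to the root `s` of the `PTree`). -/
inductive PTree : Type where
  | node : List PTree → PTree

namespace PTree

/-- The (ordered) subtrees attached to the root. -/
def children : PTree → List PTree
  | node ts => ts

/-- Number of vertices of the `PTree`, i.e. the number `N` of edges of the paper's tree. -/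
def size : PTree → ℕ
  | node ts => 1 + (ts.attach.map (fun t => size t.1)).sum
decreasing_by simp [PTree.node.sizeOf_spec]; have := List.sizeOf_lt_of_mem t.2; omega

/-- The weight `∏_{v ≠ r} w_{σ(v)}`: every vertex `v ≠ r` has degree `outdeg(v) + 1`. -/
noncomputable def weight (w : ℕ → ℝ) : PTree → ℝ
  | node ts => w (ts.length + 1) * (ts.attach.map (fun t => weight w t.1)).prod
decreasing_by simp [PTree.node.sizeOf_spec]; have := List.sizeOf_lt_of_mem t.2; omega

/-- The number of vertices of outdegree `k`, i.e. the number `X_{k+1}` of vertices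
(other than `r`) of degree `k+1`. -/
def countOutdeg (k : ℕ) : PTree → ℕ
  | node ts => (if ts.length = k then 1 else 0) + (ts.attach.map (fun t => countOutdeg k t.1)).sum
decreasing_by simp [PTree.node.sizeOf_spec]; have := List.sizeOf_lt_of_mem t.2; omega

/-- The maximal outdegree of a vertex of the tree. -/
def maxOutdeg : PTree → ℕ
  | node ts => max ts.length ((ts.attach.map (fun t => maxOutdeg t.1)).foldr max 0)
decreasing_by simp [PTree.node.sizeOf_spec]; have := List.sizeOf_lt_of_mem t.2; omega

/-- Outdegree of the first (leftmost) child `s₁` of `s` (0 if there is none). -/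
def firstChildOutdeg : PTree → ℕ
  | node [] => 0
  | node (t :: _) => t.children.length

end PTree

/-- The partition function `Z_N = Σ_{τ ∈ Γ_N} ∏_{v ∈ V(τ)∖{r}} w_{σ(v)}`. -/
noncomputable def Zfun (w : ℕ → ℝ) (N : ℕ) : ℝ :=
  ∑' t : {t : PTree // t.size = N}, t.1.weight w

/-- `ν_N(P)`: probability of the event `P` under the simply generated measure `ν_N`. -/
noncomputable def nu (w : ℕ → ℝ) (N : ℕ) (P : PTree → Prop) : ℝ :=
  (∑' t : {t : PTree // t.size = N ∧ P t}, t.1.weight w) / Zfun w N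

namespace PTree

noncomputable instance : DecidableEq PTree := Classical.decEq _

theorem size_node (ts : List PTree) : size (node ts) = 1 + (ts.map size).sum := by
  rw [size]; simp

theorem weight_node (w : ℕ → ℝ) (ts : List PTree) :
    weight w (node ts) = w (ts.length + 1) * (ts.map (weight w)).prod := by
  rw [weight]; simp

theorem countOutdeg_node (k : ℕ) (ts : List PTree) :
    countOutdeg k (node ts) = (if ts.length = k then 1 else 0) + (ts.map (countOutdeg k)).sum := by
  rw [countOutdeg]; simp

def degs : PTree → Multiset ℕ
  | node ts => ts.length ::ₘ (ts.attach.map (fun t => degs t.1)).sum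
decreasing_by simp [PTree.node.sizeOf_spec]; have := List.sizeOf_lt_of_mem t.2; omega

def fdegs (l : List PTree) : Multiset ℕ := (l.map degs).sum

theorem degs_node (ts : List PTree) : degs (node ts) = ts.length ::ₘ fdegs ts := by
  rw [degs, fdegs]; simp

theorem fdegs_cons (cs ts : List PTree) :
    fdegs (node cs :: ts) = cs.length ::ₘ fdegs (cs ++ ts) := by
  simp [fdegs, degs_node]

/-- total size of a forest -/
def fsize (l : List PTree) : ℕ := (l.map size).sum

theorem fsize_cons (cs ts : List PTree) :
    fsize (node cs :: ts) = fsize (cs ++ ts) + 1 := by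
  simp [fsize, size_node]; ring

theorem forest_ind {P : List PTree → Prop} (h0 : P [])
    (h1 : ∀ cs ts, P (cs ++ ts) → P (node cs :: ts)) : ∀ l, P l := by
  have : ∀ n l, fsize l = n → P l := by
    intro n
    induction n with
    | zero =>
      intro l hl
      match l with
      | [] => exact h0
      | node cs :: ts => rw [fsize_cons] at hl; omega
    | succ n ih =>
      intro l hl
      match l with
      | [] => exact h0
      | node cs :: ts => rw [fsize_cons] at hl; exact h1 _ _ (ih _ (by omega))
  intro l
  exact this _ l rfl

theorem fweight (w : ℕ → ℝ) : ∀ l : List PTree,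
    (l.map (weight w)).prod = ((fdegs l).map (fun k => w (k + 1))).prod := by
  apply forest_ind
  · simp [fdegs]
  · intro cs ts h
    rw [fdegs_cons, Multiset.map_cons, Multiset.prod_cons, ← h]
    simp [weight_node, mul_assoc]

theorem fcount (k : ℕ) : ∀ l : List PTree,
    (l.map (countOutdeg k)).sum = (fdegs l).count k := by
  apply forest_ind
  · simp [fdegs]
  · intro cs ts h
    rw [fdegs_cons, Multiset.count_cons, ← h]
    simp [countOutdeg_node, eq_comm]; ring

noncomputable def FS : ℕ → ℕ → Finset (List PTree)
  | 0, 0 => {[]}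
  | 0, _ + 1 => ∅
  | _ + 1, 0 => ∅
  | n + 1, k + 1 => (Finset.range (n + 1)).biUnion fun d =>
      (FS n (k + d)).image (fun l => node (l.take d) :: l.drop d)

theorem length_le_fsize (l : List PTree) : l.length ≤ fsize l := by
  induction l with
  | nil => simp [fsize]
  | cons a l ih =>
    match a with
    | node cs => 
      simp only [fsize, List.map_cons, List.sum_cons, List.length_cons, size_node] at *
      omega

theorem mem_FS (n k : ℕ) (l : List PTree) : l ∈ FS n k ↔ fsize l = n ∧ l.length = k := by
  induction n generalizing k l with
  | zero =>
    have := length_le_fsize l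
    cases k with
    | zero => 
      simp only [FS, Finset.mem_singleton, List.length_eq_zero_iff]
      constructor
      · rintro rfl; simp [fsize]
      · exact fun h => h.2
    | succ k => simp [FS]; omega
  | succ n ih =>
    cases k with
    | zero =>
      simp only [FS, Finset.notMem_empty, false_iff, List.length_eq_zero_iff]
      rintro ⟨h, rfl⟩
      simp [fsize] at h
    | succ k =>
      simp only [FS, Finset.mem_biUnion, Finset.mem_range, Finset.mem_image, ih]
      constructor
      · rintro ⟨d, hd, l, ⟨h1, h2⟩, rfl⟩
        rw [fsize_cons, List.take_append_drop]
        simp [h1, h2]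
      · rintro ⟨h1, h2⟩
        match l with
        | [] => simp at h2
        | node cs :: ts =>
          rw [fsize_cons] at h1
          have := length_le_fsize (cs ++ ts)
          simp at this h2
          refine ⟨cs.length, by omega, cs ++ ts, ⟨by omega, by simp; omega⟩, by simp⟩

theorem sum_FS (n k : ℕ) (F : Multiset ℕ → ℝ) :
    ∑ l ∈ FS (n + 1) (k + 1), F (fdegs l) =
      ∑ d ∈ Finset.range (n + 1), ∑ l ∈ FS n (k + d), F (d ::ₘ fdegs l) := by
  rw [FS, Finset.sum_biUnion]
  · refine Finset.sum_congr rfl fun d _ => ?_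
    rw [Finset.sum_image]
    · refine Finset.sum_congr rfl fun l hl => ?_
      rw [mem_FS] at hl
      rw [fdegs_cons, List.take_append_drop, List.length_take, min_eq_left (by omega)]
    · intro l _ l' _ h
      simp at h
      rw [← List.take_append_drop d l, h.1, h.2, List.take_append_drop]
  · intro d _ d' _ hdd
    rw [Function.onFun, Finset.disjoint_left]
    intro l h h'
    simp only [Finset.mem_image, mem_FS] at h h'
    obtain ⟨a, ⟨_, ha⟩, rfl⟩ := h
    obtain ⟨b, ⟨_, hb⟩, hab⟩ := h'
    simp at hab
    have := congrArg List.length hab.1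
    simp at this
    omega

end PTree

open Finset.Nat (antidiagonalTuple mem_antidiagonalTuple)

theorem sum_AT (n s : ℕ) (H : (Fin (n + 1) → ℕ) → ℝ) :
    ∑ e ∈ antidiagonalTuple (n + 1) s, H e =
      ∑ d ∈ Finset.range (s + 1), ∑ e ∈ antidiagonalTuple n (s - d), H (Fin.cons d e) := by
  rw [Finset.sum_sigma']
  symm
  refine Finset.sum_bij' (fun p _ => Fin.cons p.1 p.2) (fun e _ => ⟨e 0, Fin.tail e⟩) ?_ ?_ ?_ ?_ ?_
  · rintro ⟨d, e⟩ h
    simp [mem_antidiagonalTuple, Fin.sum_univ_succ] at h ⊢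
    omega
  · intro e h
    simp [mem_antidiagonalTuple, Fin.sum_univ_succ, Fin.tail] at h ⊢
    omega
  · rintro ⟨d, e⟩ h
    simp
  · intro e h
    simp
  · rintro ⟨d, e⟩ h
    rfl

theorem sum_perm (n s : ℕ) (F : Multiset ℕ → ℝ) (i : Fin (n + 1)) :
    ∑ e ∈ antidiagonalTuple (n + 1) s, (e i : ℝ) * F (Finset.univ.val.map e) =
    ∑ e ∈ antidiagonalTuple (n + 1) s, (e 0 : ℝ) * F (Finset.univ.val.map e) := by
  have key : ∀ (e : Fin (n+1) → ℕ) (σ : Equiv.Perm (Fin (n+1))), 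
      Finset.univ.val.map (e ∘ σ) = Finset.univ.val.map e := by
    intro e σ
    rw [← Multiset.map_map]
    congr 1
    simp
  refine Finset.sum_bij' (fun e _ => e ∘ Equiv.swap 0 i) (fun e _ => e ∘ Equiv.swap 0 i) ?_ ?_ ?_ ?_ ?_
  · intro e h
    rw [mem_antidiagonalTuple] at h ⊢
    rw [← h]; exact Equiv.sum_comp (Equiv.swap 0 i) e
  · intro e h
    rw [mem_antidiagonalTuple] at h ⊢
    rw [← h]; exact Equiv.sum_comp (Equiv.swap 0 i) e
  · intro e h; ext j; simp
  · intro e h; ext j; simp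
  · intro e h
    rw [key]; simp

theorem sum_sym (n s : ℕ) (F : Multiset ℕ → ℝ) :
    (n + 1 : ℝ) * ∑ e ∈ antidiagonalTuple (n + 1) s, (e 0 : ℝ) * F (Finset.univ.val.map e) =
    s * ∑ e ∈ antidiagonalTuple (n + 1) s, F (Finset.univ.val.map e) := by
  have h : ∑ i : Fin (n+1), ∑ e ∈ antidiagonalTuple (n + 1) s, (e i : ℝ) * F (Finset.univ.val.map e)
     = s * ∑ e ∈ antidiagonalTuple (n + 1) s, F (Finset.univ.val.map e) := by
    rw [Finset.sum_comm, Finset.mul_sum]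
    refine Finset.sum_congr rfl fun e he => ?_
    rw [mem_antidiagonalTuple] at he
    rw [← Finset.sum_mul, ← he]; push_cast; rfl
  rw [← h, Finset.sum_congr rfl (fun i _ => sum_perm n s F i)]
  simp

theorem map_cons_univ (n d : ℕ) (e : Fin n → ℕ) :
    (Finset.univ : Finset (Fin (n+1))).val.map (Fin.cons d e : Fin (n+1) → ℕ) = 
      d ::ₘ (Finset.univ : Finset (Fin n)).val.map e := by
  rw [Fin.univ_succ]
  simp

theorem cycle_lemma (n : ℕ) : ∀ (k s : ℕ) (F : Multiset ℕ → ℝ), k + s = n →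
    (n : ℝ) * ∑ l ∈ PTree.FS n k, F (PTree.fdegs l) =
      k * ∑ e ∈ antidiagonalTuple n s, F (Finset.univ.val.map e) := by
  induction n with
  | zero => intro k s F h; have : k = 0 := by omega
            subst this; simp
  | succ n ih =>
    intro k s F h
    cases k with
    | zero => simp [PTree.FS]
    | succ k =>
      rw [PTree.sum_FS]
      have hs : s ≤ n := by omega
      have hr : ∑ d ∈ Finset.range (n + 1), ∑ l ∈ PTree.FS n (k + d), F (d ::ₘ PTree.fdegs l)
        = ∑ d ∈ Finset.range (s + 1), ∑ l ∈ PTree.FS n (k + d), F (d ::ₘ PTree.fdegs l) := by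
        symm
        apply Finset.sum_subset
        · intro x; simp; omega
        · intro d _ hd
          apply Finset.sum_eq_zero
          intro l hl
          rw [PTree.mem_FS] at hl
          have := PTree.length_le_fsize l
          simp at hd
          omega
      rw [hr]
      rcases Nat.eq_zero_or_pos n with rfl | hn
      · have h1 : k = 0 := by omega
        have h2 : s = 0 := by omega
        subst h1 h2
        simp [PTree.FS, PTree.fdegs]
      · have e1 : (n : ℝ) * ∑ d ∈ Finset.range (s + 1), ∑ l ∈ PTree.FS n (k + d), F (d ::ₘ PTree.fdegs l)
            = k * ∑ e ∈ antidiagonalTuple (n+1) s, F (Finset.univ.val.map e) + 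
              ∑ e ∈ antidiagonalTuple (n+1) s, (e 0 : ℝ) * F (Finset.univ.val.map e) := by
          rw [Finset.mul_sum, Finset.mul_sum, ← Finset.sum_add_distrib, sum_AT]
          refine Finset.sum_congr rfl fun d hd => ?_
          simp at hd
          rw [ih (k + d) (s - d) (fun M => F (d ::ₘ M)) (by omega), Finset.mul_sum]
          refine Finset.sum_congr rfl fun e he => ?_
          rw [map_cons_univ]
          push_cast
          simp
          ring
        have e2 := sum_sym n s F
        have hn' : (n : ℝ) ≠ 0 := by positivity
        have hs' : (n : ℝ) = k + s := by
          have : k + s = n := by omega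
          rw [← this]; push_cast; rfl
        apply mul_left_cancel₀ hn'
        push_cast
        generalize (∑ e ∈ antidiagonalTuple (n+1) s, (e 0 : ℝ) * F (Finset.univ.val.map e)) = A at *
        generalize (∑ e ∈ antidiagonalTuple (n+1) s, F (Finset.univ.val.map e)) = B at *
        have : (s : ℝ) = n - k := by linarith
        rw [this] at e2
        linear_combination (n + 1 : ℝ) * e1 + e2

/-- the tree sum -/
theorem tree_sum (n : ℕ) (w : ℕ → ℝ) (K : ℕ) (Q : ℕ → Prop) [DecidablePred Q] :
    (n + 1 : ℝ) * ∑' t : {t : PTree // t.size = n + 1 ∧ Q (t.countOutdeg K)}, t.1.weight w =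
      ∑ e ∈ (antidiagonalTuple (n + 1) n).filter
        (fun e => Q (Finset.univ.filter (fun i => e i = K)).card), ∏ i, w (e i + 1) := by
  classical
  have h := cycle_lemma (n + 1) 1 n (fun M => if Q (M.count K) then (M.map (fun k => w (k+1))).prod else 0)
    (by omega)
  rw [Finset.sum_filter]
  simp only [Nat.cast_one, one_mul] at h
  push_cast at h
  have hc : ∀ e : Fin (n+1) → ℕ, (Finset.univ.val.map e).count K = (Finset.univ.filter (fun i => e i = K)).card := by
    intro e
    rw [Multiset.count_map]
    simp [Finset.card_def, eq_comm]
  simp only [hc, Multiset.map_map] at h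
  refine Eq.trans ?_ h
  congr 1
  rw [← Finset.sum_filter]
  let S : Finset PTree := ((PTree.FS (n + 1) 1).filter (fun l => Q ((PTree.fdegs l).count K))).image (fun l => l.headD (PTree.node []))
  have hS : ∀ t, t ∈ S ↔ t.size = n + 1 ∧ Q (t.countOutdeg K) := by
    intro t
    simp only [S, Finset.mem_image, Finset.mem_filter, PTree.mem_FS, List.length_eq_one_iff]
    constructor
    · rintro ⟨l, ⟨⟨h1, a, rfl⟩, h3⟩, rfl⟩
      simp [← PTree.fcount] at h3
      simp [PTree.fsize] at h1
      simp [h1, h3]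
    · rintro ⟨h1, h2⟩
      exact ⟨[t], ⟨⟨by simp [PTree.fsize, h1], t, rfl⟩, by simpa [← PTree.fcount] using h2⟩, by simp⟩
  have e1 : ∑' t : {t : PTree // t.size = n + 1 ∧ Q (t.countOutdeg K)}, t.1.weight w
      = ∑ t ∈ S, t.weight w := by
    rw [← Finset.tsum_subtype S (fun t => t.weight w)]
    exact Equiv.tsum_eq (Equiv.subtypeEquivRight (fun t => (hS t).symm)) (fun t : {t // t ∈ S} => t.1.weight w)
  rw [e1, Finset.sum_image]
  · refine Finset.sum_congr rfl fun l hl => ?_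
    simp only [Finset.mem_filter, PTree.mem_FS, List.length_eq_one_iff] at hl
    obtain ⟨⟨_, a, rfl⟩, _⟩ := hl
    rw [← PTree.fweight]; simp
  · intro l hl l' hl' hh
    simp only [Finset.coe_filter, Set.mem_ofPred_eq, PTree.mem_FS, List.length_eq_one_iff] at hl hl'
    obtain ⟨⟨_, a, rfl⟩, _⟩ := hl
    obtain ⟨⟨_, b, rfl⟩, _⟩ := hl'
    simpa using hh

noncomputable def Wt (α : ℝ) {n : ℕ} (d : Fin (n + 1) → ℕ) : ℝ := ∏ i, ((d i).factorial : ℝ) ^ α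

def Xc (K : ℕ) {n : ℕ} (d : Fin (n + 1) → ℕ) : ℕ := (Finset.univ.filter (fun i => d i = K)).card

abbrev Om (n : ℕ) := antidiagonalTuple (n + 1) n

noncomputable def Zt (α : ℝ) (n : ℕ) : ℝ := ∑ d ∈ Om n, Wt α d

theorem Wt_pos (α : ℝ) {n : ℕ} (d : Fin (n + 1) → ℕ) : 0 < Wt α d :=
  Finset.prod_pos fun i _ => Real.rpow_pos_of_pos (by exact_mod_cast Nat.factorial_pos _) _

theorem Zt_ge (α : ℝ) (n : ℕ) : (n.factorial : ℝ) ^ α ≤ Zt α n := by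
  have h : (Pi.single 0 n : Fin (n+1) → ℕ) ∈ Om n := by
    rw [mem_antidiagonalTuple]; simp
  have := Finset.single_le_sum (f := fun d => Wt α d) (fun d _ => (Wt_pos α d).le) h
  refine le_trans (le_of_eq ?_) this
  simp only [Wt]
  rw [Fin.prod_univ_succ]
  simp

theorem Zt_pos (α : ℝ) (n : ℕ) : 0 < Zt α n :=
  lt_of_lt_of_le (Real.rpow_pos_of_pos (by exact_mod_cast Nat.factorial_pos _) _) (Zt_ge α n)

theorem prod_two {M : Type*} [CommMonoid M] {n : ℕ} {i g : Fin (n+1)} (h : g ≠ i) (F : Fin (n+1) → M) :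
    ∏ j, F j = F g * (F i * ∏ j ∈ (Finset.univ.erase g).erase i, F j) := by
  rw [Finset.mul_prod_erase _ F (by simp [h.symm]), Finset.mul_prod_erase _ F (by simp)]

theorem sum_two {M : Type*} [AddCommMonoid M] {n : ℕ} {i g : Fin (n+1)} (h : g ≠ i) (F : Fin (n+1) → M) :
    ∑ j, F j = F g + (F i + ∑ j ∈ (Finset.univ.erase g).erase i, F j) := by
  rw [Finset.add_sum_erase _ F (by simp [h.symm]), Finset.add_sum_erase _ F (by simp)]

/-- move -/
def mv {n : ℕ} (i g : Fin (n+1)) (a b : ℕ) (d : Fin (n+1) → ℕ) : Fin (n+1) → ℕ :=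
  fun j => if j = g then b else if j = i then a else d j

theorem mv_g {n : ℕ} (i g : Fin (n+1)) (a b : ℕ) (d : Fin (n+1) → ℕ) : mv i g a b d g = b := by
  simp [mv]
theorem mv_i {n : ℕ} {i g : Fin (n+1)} (h : g ≠ i) (a b : ℕ) (d : Fin (n+1) → ℕ) : mv i g a b d i = a := by
  simp [mv, h.symm]
theorem mv_o {n : ℕ} {i g j : Fin (n+1)} (a b : ℕ) (d : Fin (n+1) → ℕ) 
    (hj : j ∈ (Finset.univ.erase g).erase i) : mv i g a b d j = d j := by
  simp at hj
  simp [mv, hj]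

theorem sum_mv {n : ℕ} {i g : Fin (n+1)} (h : g ≠ i) (k : ℕ) (H : (Fin (n+1) → ℕ) → ℝ) :
    ∑ d ∈ (Om n).filter (fun d => d i = k), H d = 
    ∑ d ∈ (Om n).filter (fun d => d i = 0 ∧ k ≤ d g), H (mv i g k (d g - k) d) := by
  refine Finset.sum_bij' (fun d _ => mv i g 0 (d g + k) d) (fun d _ => mv i g k (d g - k) d) ?_ ?_ ?_ ?_ ?_
  · intro d hd
    simp only [Finset.mem_filter, mem_antidiagonalTuple, sum_two h] at hd ⊢
    rw [mv_g, mv_i h, Finset.sum_congr rfl (fun j hj => mv_o _ _ d hj)]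
    omega
  · intro d hd
    simp only [Finset.mem_filter, mem_antidiagonalTuple, sum_two h] at hd ⊢
    rw [mv_g, mv_i h, Finset.sum_congr rfl (fun j hj => mv_o _ _ d hj)]
    omega
  · intro d hd
    simp only [Finset.mem_filter] at hd
    ext j
    simp only [mv]
    split_ifs <;> simp_all
  · intro d hd
    simp only [Finset.mem_filter] at hd
    ext j
    simp only [mv]
    split_ifs <;> simp_all
  · intro d hd
    simp only [Finset.mem_filter] at hd
    congr 1
    ext j
    simp only [mv]
    split_ifs <;> simp_all

theorem Wt_mv (α : ℝ) {n : ℕ} {i g : Fin (n+1)} (h : g ≠ i) (k : ℕ) (d : Fin (n+1) → ℕ) (hi : d i = 0)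
    (hk : k ≤ d g) :
    Wt α (mv i g k (d g - k) d) = Wt α d * ((d g).choose k : ℝ)⁻¹ ^ α := by
  simp only [Wt]
  rw [prod_two h, prod_two h (fun j => ((d j).factorial : ℝ) ^ α), mv_g, mv_i h,
    Finset.prod_congr rfl (fun j hj => by rw [mv_o _ _ d hj]), hi]
  have : ((d g).choose k : ℝ)⁻¹ = k.factorial * (d g - k).factorial / (d g).factorial := by
    rw [Nat.cast_choose ℝ hk, inv_div]
  rw [this, Real.div_rpow (by positivity) (by positivity), Real.mul_rpow (by positivity) (by positivity)]
  have : ((d g).factorial : ℝ) ^ α ≠ 0 := (Real.rpow_pos_of_pos (by exact_mod_cast Nat.factorial_pos _) _).ne'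
  field_simp
  simp

theorem Xc_mv (K : ℕ) (hK : 0 < K) {n : ℕ} {i g : Fin (n+1)} (h : g ≠ i) (d : Fin (n+1) → ℕ) (hi : d i = 0)
    (hk : K < d g - K) :
    Xc K (mv i g K (d g - K) d) = Xc K d + 1 := by
  simp only [Xc, Finset.card_filter]
  rw [sum_two h, sum_two h (fun j => if d j = K then 1 else 0), mv_g, mv_i h,
    Finset.sum_congr rfl (fun j hj => by rw [mv_o _ _ d hj]), hi]
  rw [if_neg (by omega), if_pos rfl, if_neg (by omega), if_neg (by omega)]
  omega

theorem two_pow_le (D k : ℕ) (h : k ≤ D) : 2 ^ k ≤ (D + k).choose k := by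
  induction k with
  | zero => simp
  | succ k ih =>
    have h1 := ih (by omega)
    have h2 := Nat.add_one_mul_choose_eq (D + k) k
    have : (2 ^ (k+1)) * (k + 1) ≤ (D + k + 1).choose (k+1) * (k + 1) := by
      rw [← h2, pow_succ, mul_assoc, mul_comm]
      exact Nat.mul_le_mul (by omega) h1
    exact Nat.le_of_mul_le_mul_right this (by omega)

theorem choose_bd {α c : ℝ} (hα : 0 < α) (n D k : ℕ) (hc : 0 < c * n) (hD : c * n ≤ D) (hk : 1 ≤ k) (hkD : k ≤ D) :
    ((D + k).choose k : ℝ)⁻¹ ^ α ≤ ((c * n) ^ (α / 2))⁻¹ * ((2:ℝ) ^ (-(α / 2))) ^ k := by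
  have h1 : D + 1 ≤ (D + k).choose k := by
    have e : (D + k).choose k = (D + k).choose D := by
      have := Nat.choose_symm_add (a := D) (b := k)
      omega
    rw [e]
    calc D + 1 = (D + 1).choose D := by simp
      _ ≤ _ := Nat.choose_le_choose D (by omega)
  have h2 := two_pow_le D k hkD
  have h3 : c * n * 2 ^ k ≤ ((D + k).choose k : ℝ) ^ 2 := by
    have a1 : c * n ≤ ((D + k).choose k : ℝ) := by
      have : ((D + 1 : ℕ) : ℝ) ≤ ((D + k).choose k : ℝ) := by exact_mod_cast h1
      push_cast at this; linarith
    have a2 : (2 : ℝ) ^ k ≤ ((D + k).choose k : ℝ) := by exact_mod_cast h2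
    rw [sq]
    exact mul_le_mul a1 a2 (by positivity) (by positivity)
  have h4 : ((D + k).choose k : ℝ) ^ α = (((D + k).choose k : ℝ) ^ 2) ^ (α / 2) := by
    rw [← Real.rpow_natCast, ← Real.rpow_mul (by positivity)]
    congr 1; push_cast; ring
  have h5 := Real.rpow_le_rpow (by positivity) h3 (by positivity : 0 ≤ α / 2)
  rw [← h4, Real.mul_rpow hc.le (by positivity)] at h5
  rw [Real.inv_rpow (by positivity)]
  have h6 : ((2:ℝ) ^ (-(α / 2))) ^ k = (((2 : ℝ) ^ k) ^ (α / 2))⁻¹ := by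
    rw [Real.rpow_neg (by norm_num), inv_pow, ← Real.rpow_natCast, ← Real.rpow_natCast, ← Real.rpow_mul (by norm_num), ← Real.rpow_mul (by norm_num), mul_comm]
  rw [h6, ← mul_inv]
  exact inv_anti₀ (mul_pos (Real.rpow_pos_of_pos hc _) (by positivity)) h5

theorem rest_sum {n : ℕ} (d : Fin (n+1) → ℕ) (hd : d ∈ Om n) (g : Fin (n+1)) :
    ∑ i ∈ Finset.univ.erase g, ∑ k ∈ Finset.Icc 1 n, (if d i = k then (k : ℝ) else 0) = (n : ℝ) - d g := by
  rw [mem_antidiagonalTuple] at hd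
  have : ∀ i ∈ Finset.univ.erase g, ∑ k ∈ Finset.Icc 1 n, (if d i = k then (k : ℝ) else 0) = d i := by
    intro i _
    rw [Finset.sum_ite_eq]
    have : d i ≤ n := by rw [← hd]; exact Finset.single_le_sum (f := d) (by simp) (Finset.mem_univ i)
    split_ifs with h
    · rfl
    · simp at h
      have : d i = 0 := by by_contra h'; have := h (by omega); omega
      simp [this]
  rw [Finset.sum_congr rfl this]
  have h2 := Finset.add_sum_erase Finset.univ (fun i => (d i : ℝ)) (Finset.mem_univ g)
  have h3 : (n : ℝ) = ∑ i, (d i : ℝ) := by exact_mod_cast hd.symm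
  rw [h3, ← h2]; ring

open Classical in
theorem mass_rest {α c : ℝ} (hα : 0 < α) (n : ℕ) (hc : 0 < c * n) :
    ∑ d ∈ Om n, ∑ g, (if c * n ≤ d g ∧ (∀ j, d j ≤ d g) then Wt α d else 0) * ((n : ℝ) - d g) ≤
    (n + 1) * Zt α n * (((c * n) ^ (α / 2))⁻¹ * ∑' k : ℕ, (k : ℝ) * ((2:ℝ) ^ (-(α / 2))) ^ k) := by
  set r : ℝ := (2:ℝ) ^ (-(α / 2)) with hr
  have hr0 : 0 < r := by positivity
  have hr1 : r < 1 := Real.rpow_lt_one_of_one_lt_of_neg (by norm_num) (by linarith)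
  have hsum : Summable (fun k : ℕ => (k : ℝ) * r ^ k) := by
    have := summable_pow_mul_geometric_of_norm_lt_one 1 (r := r) (by rw [Real.norm_of_nonneg hr0.le]; exact hr1)
    simpa using this
  let H : Fin (n+1) → (Fin (n+1) → ℕ) → ℝ := fun g d => if c * n ≤ d g ∧ (∀ j, d j ≤ d g) then Wt α d else 0
  let S : Fin (n+1) → (Fin (n+1) → ℕ) → ℝ := fun g d => if (∀ j, j ≠ g → d j < d g) then Wt α d else 0
  have hS0 : ∀ g d, 0 ≤ S g d := by
    intro g d; simp only [S]; split_ifs; exact (Wt_pos α d).le; exact le_rfl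
  have e1 : ∑ d ∈ Om n, ∑ g, H g d * ((n : ℝ) - d g) = 
     ∑ g, ∑ i ∈ Finset.univ.erase g, ∑ k ∈ Finset.Icc 1 n, (k : ℝ) * ∑ d ∈ (Om n).filter (fun d => d i = k), H g d := by
    rw [Finset.sum_comm]
    refine Finset.sum_congr rfl fun g _ => ?_
    rw [Finset.sum_congr rfl (fun d hd => by rw [← rest_sum d hd g])]
    simp_rw [Finset.mul_sum]
    rw [Finset.sum_comm]
    refine Finset.sum_congr rfl fun i _ => ?_
    rw [Finset.sum_comm]
    refine Finset.sum_congr rfl fun k _ => ?_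
    rw [Finset.sum_filter]
    refine Finset.sum_congr rfl fun d _ => ?_
    split_ifs <;> simp [mul_comm]
  have e2 : ∀ g, ∀ i ∈ Finset.univ.erase g, ∀ k ∈ Finset.Icc 1 n, 
      (k : ℝ) * ∑ d ∈ (Om n).filter (fun d => d i = k), H g d ≤ 
      (k : ℝ) * (∑ d ∈ Om n, (((c * n) ^ (α / 2))⁻¹ * r ^ k) * S g d) := by
    intro g i hi k hk
    have hgi : g ≠ i := by simp at hi; exact fun h => hi h.symm
    simp at hk
    refine mul_le_mul_of_nonneg_left ?_ (by positivity)
    rw [sum_mv hgi]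
    refine le_trans (Finset.sum_le_sum (g := fun d => (((c * n) ^ (α / 2))⁻¹ * r ^ k) * S g d) ?_) (Finset.sum_le_sum_of_subset_of_nonneg (Finset.filter_subset _ _) ?_)
    · intro d hd
      simp only [Finset.mem_filter] at hd
      obtain ⟨-, hd0, hdk⟩ := hd
      simp only [H]
      split_ifs with hh
      · rw [mv_g] at hh
        obtain ⟨h1, h2⟩ := hh
        have h3 := h2 i
        rw [mv_i hgi] at h3
        have hS : S g d = Wt α d := by
          simp only [S]
          rw [if_pos]
          intro j hj
          by_cases hji : j = i
          · subst hji; omega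
          · have := h2 j
            rw [mv_o _ _ d (by simp [hj, hji])] at this
            omega
        rw [hS, Wt_mv α hgi k d hd0 hdk, mul_comm]
        refine mul_le_mul_of_nonneg_right ?_ (Wt_pos α d).le
        have := choose_bd hα n (d g - k) k hc h1 hk.1 h3
        rwa [Nat.sub_add_cancel hdk] at this
      · exact mul_nonneg (by positivity) (hS0 _ _)
    · intro d _ _
      exact mul_nonneg (by positivity) (hS0 _ _)
  have e3 : ∀ d, ∑ g, S g d ≤ Wt α d := by
    intro d
    by_cases h : ∃ g, ∀ j, j ≠ g → d j < d g
    · obtain ⟨g, hg⟩ := h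
      rw [Finset.sum_eq_single g]
      · simp only [S]; rw [if_pos hg]
      · intro b _ hb
        simp only [S]; rw [if_neg]
        intro h
        have := h g (Ne.symm hb)
        have := hg b hb
        omega
      · simp
    · rw [Finset.sum_eq_zero]
      · exact (Wt_pos α d).le
      · intro g _
        simp only [S]; rw [if_neg]
        intro h'; exact h ⟨g, h'⟩
  change ∑ d ∈ Om n, ∑ g, H g d * ((n : ℝ) - d g) ≤ _
  rw [e1]
  set q := ((c * n) ^ (α / 2))⁻¹ with hq
  have hq0 : 0 ≤ q := by positivity
  calc _ ≤ ∑ g : Fin (n+1), ∑ i ∈ Finset.univ.erase g, ∑ k ∈ Finset.Icc 1 n, (k : ℝ) * (∑ d ∈ Om n, (q * r ^ k) * S g d) :=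
        Finset.sum_le_sum fun g _ => Finset.sum_le_sum fun i hi => Finset.sum_le_sum fun k hk => e2 g i hi k hk
    _ = ∑ g : Fin (n+1), (n : ℝ) * ((∑ k ∈ Finset.Icc 1 n, (k : ℝ) * r ^ k) * (q * ∑ d ∈ Om n, S g d)) := by
        refine Finset.sum_congr rfl fun g _ => ?_
        rw [Finset.sum_const, Finset.card_erase_of_mem (Finset.mem_univ g)]
        simp only [Finset.card_univ, Fintype.card_fin, Nat.add_sub_cancel, nsmul_eq_mul]
        congr 1
        rw [Finset.sum_mul]
        refine Finset.sum_congr rfl fun k _ => ?_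
        rw [← Finset.mul_sum]; ring
    _ = n * (∑ k ∈ Finset.Icc 1 n, (k : ℝ) * r ^ k) * q * ∑ d ∈ Om n, ∑ g, S g d := by
        rw [Finset.sum_comm, Finset.mul_sum]
        refine Finset.sum_congr rfl fun g _ => ?_
        ring
    _ ≤ (n + 1) * (∑' k : ℕ, (k : ℝ) * r ^ k) * q * Zt α n := by
        have b1 : ∑ k ∈ Finset.Icc 1 n, (k : ℝ) * r ^ k ≤ ∑' k : ℕ, (k : ℝ) * r ^ k :=
          hsum.sum_le_tsum _ (fun k _ => by positivity)
        have b2 : ∑ d ∈ Om n, ∑ g, S g d ≤ Zt α n := Finset.sum_le_sum fun d _ => e3 d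
        have b3 : 0 ≤ ∑ d ∈ Om n, ∑ g, S g d := Finset.sum_nonneg fun d _ => Finset.sum_nonneg fun g _ => hS0 g d
        have b4 : 0 ≤ ∑ k ∈ Finset.Icc 1 n, (k : ℝ) * r ^ k := Finset.sum_nonneg fun k _ => by positivity
        gcongr
        linarith
    _ = _ := by ring

theorem card_AT (n : ℕ) : ∀ s, ∑ e ∈ antidiagonalTuple n s, (1 : ℝ) ≤ 2 ^ n * 2 ^ s := by
  induction n with
  | zero => 
    intro s
    cases s with
    | zero => simp
    | succ s => simp
  | succ n ih =>
    intro s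
    rw [sum_AT]
    calc _ ≤ ∑ d ∈ Finset.range (s + 1), (2:ℝ) ^ n * 2 ^ (s - d) := Finset.sum_le_sum fun d _ => ih _
      _ = 2 ^ n * ∑ d ∈ Finset.range (s + 1), (2:ℝ) ^ d := by
        rw [← Finset.mul_sum]
        congr 1
        exact Finset.sum_range_reflect (fun d => (2:ℝ) ^ d) (s + 1)
      _ ≤ _ := by
        rw [geom_sum_eq (by norm_num)]
        rw [pow_succ 2 n, mul_assoc]
        refine mul_le_mul_of_nonneg_left ?_ (by positivity)
        rw [pow_succ]; norm_num; linarith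

open Classical in
theorem no_giant (K : ℕ) (hK : 0 < K) (α : ℝ) (hα : α = 1 / (K : ℝ)) (n : ℕ) :
    ∑ d ∈ (Om n).filter (fun d => ∀ i, (d i : ℝ) ≤ ((1 / 8) ^ K / Real.exp 1) * n), Wt α d ≤ 2 * (1 / 2) ^ n * Zt α n := by
  have hα0 : 0 < α := by rw [hα]; positivity
  have hKα : (K : ℝ) * α = 1 := by rw [hα]; field_simp
  set c : ℝ := (1 / 8) ^ K / Real.exp 1 with hc
  have hc0 : 0 < c := by positivity
  have h1 : ∀ d ∈ (Om n).filter (fun d => ∀ i, (d i : ℝ) ≤ c * n), Wt α d ≤ ((c * n) ^ n) ^ α := by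
    intro d hd
    simp only [Finset.mem_filter, mem_antidiagonalTuple] at hd
    rw [Wt, Real.finsetProd_rpow _ _ (fun i _ => by positivity)]
    apply Real.rpow_le_rpow (Finset.prod_nonneg fun i _ => by positivity) _ hα0.le
    calc ∏ i, ((d i).factorial : ℝ) ≤ ∏ i, (c * n) ^ (d i) := by
          refine Finset.prod_le_prod (fun i _ => by positivity) fun i _ => ?_
          calc ((d i).factorial : ℝ) ≤ (d i : ℝ) ^ (d i) := by exact_mod_cast Nat.factorial_le_pow (d i)
            _ ≤ _ := pow_le_pow_left₀ (by positivity) (hd.2 i) _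
      _ = (c * n) ^ n := by rw [Finset.prod_pow_eq_pow_sum, hd.1]
  have h2 : ∑ d ∈ (Om n).filter (fun d => ∀ i, (d i : ℝ) ≤ c * n), Wt α d ≤ 2 ^ (n + 1) * 2 ^ n * ((c * n) ^ n) ^ α := by
    calc _ ≤ ∑ d ∈ (Om n).filter (fun d => ∀ i, (d i : ℝ) ≤ c * n), 1 * ((c * n) ^ n) ^ α := by
          simp only [one_mul]; exact Finset.sum_le_sum h1
      _ ≤ ∑ d ∈ Om n, 1 * ((c * n) ^ n) ^ α := 
          Finset.sum_le_sum_of_subset_of_nonneg (Finset.filter_subset _ _) (fun _ _ _ => by positivity)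
      _ ≤ _ := by
          rw [← Finset.sum_mul]
          exact mul_le_mul_of_nonneg_right (card_AT _ _) (by positivity)
  have h3 : ((n : ℝ) ^ n / Real.exp n) ^ α ≤ Zt α n := by
    refine le_trans (Real.rpow_le_rpow (by positivity) ?_ hα0.le) (Zt_ge α n)
    rw [div_le_iff₀ (by positivity), mul_comm, ← div_le_iff₀ (by positivity)]
    exact Real.pow_div_factorial_le_exp _ (by positivity) n
  have h4 : ((c * n) ^ n) ^ α = (1 / 8) ^ n * ((n : ℝ) ^ n / Real.exp n) ^ α := by
    have : (c * n) ^ n = ((1 / 8 : ℝ) ^ n) ^ K * ((n : ℝ) ^ n / Real.exp n) := by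
      rw [hc, mul_pow, div_pow, ← pow_mul, ← pow_mul, mul_comm K n, ← Real.exp_nat_mul, mul_one]
      ring
    rw [this, Real.mul_rpow (by positivity) (by positivity), ← Real.rpow_natCast _ K, ← Real.rpow_mul (by positivity), hKα, Real.rpow_one]
  rw [h4] at h2
  refine h2.trans ?_
  calc _ = 2 * (1 / 2) ^ n * ((n : ℝ) ^ n / Real.exp n) ^ α := by
        have : (2 : ℝ) ^ (n + 1) * 2 ^ n * (1 / 8) ^ n = 2 * (1 / 2) ^ n := by
          rw [pow_succ, mul_comm ((2:ℝ) ^ n) 2, mul_assoc, mul_assoc, ← mul_pow, ← mul_pow]; norm_num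
        rw [← mul_assoc, this]
    _ ≤ _ := mul_le_mul_of_nonneg_left h3 (by positivity)

open Classical in
noncomputable def bad (α : ℝ) (n : ℕ) (θ : ℕ) : ℝ := 
  (∑ d ∈ (Om n).filter (fun d => ∀ g, d g < θ), Wt α d) / Zt α n

open Classical in
theorem bad_bound (K : ℕ) (hK : 0 < K) (α : ℝ) (hα : α = 1 / (K : ℝ)) : ∃ C > 0, ∀ (n θ : ℕ) (ε : ℝ), 0 < n → 
    0 < ε → (θ : ℝ) ≤ (1 - ε) * n + 1 →
    bad α n θ ≤ 2 * (1 / 2) ^ n + C * (n + 1) / (ε * n) * ((n : ℝ) ^ (α / 2))⁻¹ := by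
  have hα0 : 0 < α := by rw [hα]; positivity
  set c : ℝ := (1 / 8) ^ K / Real.exp 1 with hc
  have hc0 : 0 < c := by positivity
  set B : ℝ := ∑' k : ℕ, (k : ℝ) * ((2:ℝ) ^ (-(α / 2))) ^ k with hB
  have hB0 : 0 ≤ B := tsum_nonneg fun k => by positivity
  refine ⟨(c ^ (α/2))⁻¹ * B + 1, by positivity, ?_⟩
  intro n θ ε hn hε hθ
  have hn' : (0 : ℝ) < n := by exact_mod_cast hn
  have hcn : 0 < c * n := by positivity
  have m1 := no_giant K hK α hα n
  have m2 := mass_rest hα0 n hcn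
  rw [bad, div_le_iff₀ (Zt_pos α n)]
  let R : (Fin (n+1) → ℕ) → ℝ := fun d => ∑ g, (if c * n ≤ d g ∧ (∀ j, d j ≤ d g) then Wt α d else 0) * ((n : ℝ) - d g)
  have hR0 : ∀ d ∈ Om n, 0 ≤ R d := by
    intro d hd
    rw [mem_antidiagonalTuple] at hd
    refine Finset.sum_nonneg fun g _ => mul_nonneg ?_ ?_
    · split_ifs
      · exact (Wt_pos α d).le
      · exact le_rfl
    · have : d g ≤ n := by
        have := Finset.single_le_sum (f := d) (by simp) (Finset.mem_univ g)
        omega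
      rw [sub_nonneg]; exact_mod_cast this
  have key : ∀ d ∈ (Om n).filter (fun d => ∀ g, d g < θ), Wt α d ≤ 
      (if ∀ i, (d i : ℝ) ≤ c * n then Wt α d else 0) + (ε * n)⁻¹ * R d := by
    intro d hd
    simp only [Finset.mem_filter] at hd
    obtain ⟨hd, hdθ⟩ := hd
    have hR := hR0 d hd
    rw [mem_antidiagonalTuple] at hd
    split_ifs with h
    · have : 0 ≤ (ε * n)⁻¹ * R d := mul_nonneg (by positivity) hR
      linarith
    · push Not at h
      obtain ⟨i, hi⟩ := h
      obtain ⟨g, -, hg⟩ := Finset.exists_max_image Finset.univ d ⟨0, Finset.mem_univ _⟩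
      have hg' : ∀ j, d j ≤ d g := fun j => hg j (Finset.mem_univ _)
      have hcg : c * n ≤ d g := hi.le.trans (by exact_mod_cast hg' i)
      have hle : ε * n ≤ (n : ℝ) - d g := by
        have : ((d g + 1 : ℕ) : ℝ) ≤ θ := by exact_mod_cast hdθ g
        push_cast at this
        nlinarith
      have : Wt α d * ((n : ℝ) - d g) ≤ R d := by
        have := Finset.single_le_sum (f := fun g => (if c * n ≤ d g ∧ (∀ j, d j ≤ d g) then Wt α d else 0) * ((n : ℝ) - d g)) 
          (fun g _ => ?_) (Finset.mem_univ g)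
        · rwa [if_pos ⟨hcg, hg'⟩] at this
        · refine mul_nonneg ?_ ?_
          · split_ifs
            · exact (Wt_pos α d).le
            · exact le_rfl
          · have : d g ≤ n := by
              have := Finset.single_le_sum (f := d) (by simp) (Finset.mem_univ g)
              omega
            rw [sub_nonneg]; exact_mod_cast this
      rw [zero_add, inv_mul_eq_div, le_div_iff₀ (by positivity)]
      exact (mul_le_mul_of_nonneg_left hle (Wt_pos α d).le).trans this
  have hZ := Zt_pos α n
  calc _ ≤ ∑ d ∈ (Om n).filter (fun d => ∀ g, d g < θ), ((if ∀ i, (d i : ℝ) ≤ c * n then Wt α d else 0) + (ε * n)⁻¹ * R d) := Finset.sum_le_sum key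
    _ ≤ ∑ d ∈ Om n, ((if ∀ i, (d i : ℝ) ≤ c * n then Wt α d else 0) + (ε * n)⁻¹ * R d) := by
        refine Finset.sum_le_sum_of_subset_of_nonneg (Finset.filter_subset _ _) fun d hd _ => ?_
        have : 0 ≤ (ε * n)⁻¹ * R d := mul_nonneg (by positivity) (hR0 d hd)
        have : 0 ≤ if ∀ i, (d i : ℝ) ≤ c * n then Wt α d else 0 := by
          split_ifs
          · exact (Wt_pos α d).le
          · exact le_rfl
        linarith
    _ = ∑ d ∈ (Om n).filter (fun d => ∀ i, (d i : ℝ) ≤ c * n), Wt α d + (ε * n)⁻¹ * ∑ d ∈ Om n, R d := by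
        rw [Finset.sum_add_distrib, Finset.sum_filter, Finset.mul_sum]
    _ ≤ 2 * (1 / 2) ^ n * Zt α n + (ε * n)⁻¹ * ((n + 1) * Zt α n * (((c * n) ^ (α / 2))⁻¹ * B)) := by
        gcongr
    _ = (2 * (1 / 2) ^ n + ((c ^ (α/2))⁻¹ * B) * (n + 1) / (ε * n) * ((n : ℝ) ^ (α / 2))⁻¹) * Zt α n := by
        rw [Real.mul_rpow hc0.le hn'.le, mul_inv]
        field_simp
    _ ≤ _ := by
        gcongr
        linarith

theorem bad_nonneg (α : ℝ) (n θ : ℕ) : 0 ≤ bad α n θ := 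
  div_nonneg (Finset.sum_nonneg fun d _ => (Wt_pos α d).le) (Zt_pos α n).le


def cnt (θ : ℕ) {n : ℕ} (d : Fin (n + 1) → ℕ) : ℕ := (Finset.univ.filter (fun g => θ ≤ d g)).card

theorem main_id (α : ℝ) (K : ℕ) (hK : 0 < K) (n θ : ℕ) (hθ : K < θ) (f : ℕ → ℝ) :
    ∑ d ∈ Om n, (cnt θ d : ℝ) * (Xc K d * (Wt α d * f (Xc K d))) = 
    ∑ d ∈ Om n, ∑ g, (if θ + K ≤ d g then (Xc 0 d : ℝ) * (Wt α d * ((d g).choose K : ℝ)⁻¹ ^ α * f (Xc K d + 1)) else 0) := by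
  have h : ∀ g i : Fin (n+1), 
     ∑ d ∈ (Om n).filter (fun d => d i = K), (if θ ≤ d g then Wt α d * f (Xc K d) else 0) =
     ∑ d ∈ Om n, (if d i = 0 then (if θ + K ≤ d g then Wt α d * ((d g).choose K : ℝ)⁻¹ ^ α * f (Xc K d + 1) else 0) else 0) := by
    intro g i
    by_cases hgi : g = i
    · subst hgi
      rw [Finset.sum_eq_zero, Finset.sum_eq_zero]
      · intro d _
        split_ifs
        · omega
        · rfl
        · rfl
      · intro d hd
        simp only [Finset.mem_filter] at hd
        rw [if_neg (by omega)]
    · rw [sum_mv hgi, Finset.sum_filter]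
      refine Finset.sum_congr rfl fun d _ => ?_
      by_cases hi : d i = 0
      · by_cases hg : θ + K ≤ d g
        · rw [if_pos ⟨hi, by omega⟩, if_pos hi, if_pos hg, mv_g, if_pos (by omega), Wt_mv α hgi K d hi (by omega),
            Xc_mv K hK hgi d hi (by omega)]
        · rw [if_pos hi, if_neg hg, mv_g, if_neg (show ¬ θ ≤ d g - K by omega)]
          simp
      · rw [if_neg (by tauto), if_neg hi]
  calc _ = ∑ g : Fin (n+1), ∑ i : Fin (n+1), ∑ d ∈ (Om n).filter (fun d => d i = K), (if θ ≤ d g then Wt α d * f (Xc K d) else 0) := by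
        simp_rw [Finset.sum_filter]
        rw [Finset.sum_congr rfl (fun g _ => Finset.sum_comm), Finset.sum_comm]
        refine Finset.sum_congr rfl fun d _ => ?_
        rw [cnt, Xc, Finset.card_filter, Finset.card_filter]
        push_cast
        rw [Finset.sum_mul]
        refine Finset.sum_congr rfl fun g _ => ?_
        rw [Finset.sum_mul, Finset.mul_sum]
        refine Finset.sum_congr rfl fun i _ => ?_
        split_ifs <;> simp
    _ = ∑ g : Fin (n+1), ∑ i : Fin (n+1), ∑ d ∈ Om n, (if d i = 0 then (if θ + K ≤ d g then Wt α d * ((d g).choose K : ℝ)⁻¹ ^ α * f (Xc K d + 1) else 0) else 0) :=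
        Finset.sum_congr rfl fun g _ => Finset.sum_congr rfl fun i _ => h g i
    _ = _ := by
        rw [Finset.sum_congr rfl (fun g _ => Finset.sum_comm), Finset.sum_comm]
        refine Finset.sum_congr rfl fun d _ => ?_
        refine Finset.sum_congr rfl fun g _ => ?_
        generalize f (Xc K d + 1) = F
        rw [Xc, Finset.card_filter]
        push_cast
        split_ifs
        · rw [Finset.sum_mul]
          refine Finset.sum_congr rfl fun i _ => ?_
          split_ifs <;> simp
        · simp

theorem choose_le (K : ℕ) (hK : 0 < K) (α : ℝ) (hα : α = 1 / (K : ℝ)) (D : ℕ) (hD : K ≤ D) :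
    ((D.choose K : ℕ) : ℝ)⁻¹ ^ α ≤ (K.factorial : ℝ) ^ α / ((D + 1 - K : ℕ) : ℝ) ∧ 
    (K.factorial : ℝ) ^ α / D ≤ ((D.choose K : ℕ) : ℝ)⁻¹ ^ α := by
  have hα0 : 0 < α := by rw [hα]; positivity
  have hKα : (K : ℝ) * α = 1 := by rw [hα]; field_simp
  have h0 : 0 < D.choose K := Nat.choose_pos hD
  have hp : ∀ x : ℕ, ((x : ℝ) ^ K) ^ α = x := by
    intro x
    rw [← Real.rpow_natCast _ K, ← Real.rpow_mul (by positivity), hKα, Real.rpow_one]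
  have e : (K.factorial : ℝ) * D.choose K = D.descFactorial K := by
    exact_mod_cast (Nat.descFactorial_eq_factorial_mul_choose D K).symm
  have e2 : ((D.choose K : ℕ) : ℝ)⁻¹ ^ α = (K.factorial : ℝ) ^ α / (D.descFactorial K : ℝ) ^ α := by
    rw [← e, Real.mul_rpow (by positivity) (by positivity), Real.inv_rpow (by positivity)]
    have : (K.factorial : ℝ) ^ α ≠ 0 := (Real.rpow_pos_of_pos (by exact_mod_cast Nat.factorial_pos _) _).ne'
    field_simp
  have hd0 : 0 < D.descFactorial K := by
    rw [Nat.descFactorial_eq_factorial_mul_choose]; exact Nat.mul_pos (Nat.factorial_pos _) h0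
  rw [e2]
  constructor
  · apply div_le_div_of_nonneg_left (by positivity)
    · have : 0 < D + 1 - K := by omega
      exact_mod_cast this
    · rw [← hp (D + 1 - K)]
      refine Real.rpow_le_rpow (by positivity) ?_ hα0.le
      exact_mod_cast Nat.pow_sub_le_descFactorial D K
  · apply div_le_div_of_nonneg_left (by positivity)
    · exact Real.rpow_pos_of_pos (by exact_mod_cast hd0) _
    · rw [← hp D]
      refine Real.rpow_le_rpow (by positivity) ?_ hα0.le
      exact_mod_cast Nat.descFactorial_le_pow D K

theorem cnt_le {n θ : ℕ} (h : n < 2 * θ) (d : Fin (n+1) → ℕ) (hd : d ∈ Om n) : cnt θ d ≤ 1 := by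
  rw [mem_antidiagonalTuple] at hd
  rw [cnt, Finset.card_le_one]
  intro a ha b hb
  simp at ha hb
  by_contra hab
  rw [sum_two hab] at hd
  omega

theorem zeros_ge {n : ℕ} (d : Fin (n+1) → ℕ) (hd : d ∈ Om n) (g : Fin (n+1)) : d g ≤ Xc 0 d := by
  rw [mem_antidiagonalTuple] at hd
  rw [Xc, Finset.card_filter]
  rw [← Finset.add_sum_erase _ _ (Finset.mem_univ g)] at hd ⊢
  have : (Finset.univ.erase g).card = n := by simp
  have h2 : n ≤ ∑ j ∈ Finset.univ.erase g, ((if d j = 0 then 1 else 0) + d j) := by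
    calc n = ∑ j ∈ Finset.univ.erase g, 1 := by rw [Finset.sum_const, this]; simp
      _ ≤ _ := Finset.sum_le_sum fun j _ => by split_ifs <;> omega
  rw [Finset.sum_add_distrib] at h2
  omega

theorem Xc_le {n K : ℕ} (d : Fin (n+1) → ℕ) : Xc K d ≤ n + 1 := by
  have := Finset.card_filter_le (Finset.univ : Finset (Fin (n+1))) (fun i => d i = K)
  simpa [Xc] using this

theorem upper (K : ℕ) (hK : 0 < K) (α : ℝ) (hα : α = 1 / (K : ℝ)) (n θ : ℕ) (hθ : K < θ) (h2 : n < 2 * θ) 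
    (f : ℕ → ℝ) (hf : ∀ x, 0 ≤ f x) :
    ∑ d ∈ Om n, (cnt θ d : ℝ) * (Xc K d * (Wt α d * f (Xc K d))) ≤ 
    (K.factorial : ℝ) ^ α * ((n + 1) / θ) * ∑ d ∈ Om n, Wt α d * f (Xc K d + 1) := by
  rw [main_id α K hK n θ hθ f, Finset.mul_sum]
  refine Finset.sum_le_sum fun d hd => ?_
  have hθ0 : (0:ℝ) < θ := by exact_mod_cast (by omega : 0 < θ)
  have hW := Wt_pos α d
  have hff := hf (Xc K d + 1)
  set la := (K.factorial : ℝ) ^ α with hl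
  have hl0 : 0 ≤ la := by positivity
  have hX : (Xc 0 d : ℝ) ≤ n + 1 := by exact_mod_cast Xc_le d
  calc _ ≤ ∑ g, (if θ + K ≤ d g then la * ((n + 1) / θ) * (Wt α d * f (Xc K d + 1)) else 0) := by
        refine Finset.sum_le_sum fun g _ => ?_
        split_ifs with hg
        · have h1 := (choose_le K hK α hα (d g) (by omega)).1
          have h3 : la / ((d g + 1 - K : ℕ) : ℝ) ≤ la / θ := by
            apply div_le_div_of_nonneg_left hl0 hθ0
            exact_mod_cast (by omega : θ ≤ d g + 1 - K)
          have h4 := h1.trans h3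
          calc _ ≤ (n + 1 : ℝ) * (Wt α d * (la / θ) * f (Xc K d + 1)) := by gcongr
            _ = _ := by ring
        · exact le_rfl
    _ = (cnt (θ + K) d : ℝ) * (la * ((n + 1) / θ) * (Wt α d * f (Xc K d + 1))) := by
        rw [← Finset.sum_filter, Finset.sum_const, nsmul_eq_mul, cnt]
    _ ≤ 1 * _ := by
        refine mul_le_mul_of_nonneg_right ?_ (by positivity)
        exact_mod_cast cnt_le (by omega) d hd
    _ = _ := one_mul _

theorem lower (K : ℕ) (hK : 0 < K) (α : ℝ) (hα : α = 1 / (K : ℝ)) (n θ : ℕ) (hθ : K < θ)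
    (f : ℕ → ℝ) (hf : ∀ x, 0 ≤ f x) :
    (K.factorial : ℝ) ^ α * (θ / n) * ∑ d ∈ Om n, (cnt (θ + K) d : ℝ) * (Wt α d * f (Xc K d + 1)) ≤
    ∑ d ∈ Om n, (cnt θ d : ℝ) * (Xc K d * (Wt α d * f (Xc K d))) := by
  rw [main_id α K hK n θ hθ f, Finset.mul_sum]
  refine Finset.sum_le_sum fun d hd => ?_
  have hθ0 : (0:ℝ) < θ := by exact_mod_cast (by omega : 0 < θ)
  have hW := Wt_pos α d
  have hff := hf (Xc K d + 1)
  set la := (K.factorial : ℝ) ^ α with hl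
  have hl0 : 0 ≤ la := by positivity
  calc _ = ∑ g, (if θ + K ≤ d g then la * (θ / n) * (Wt α d * f (Xc K d + 1)) else 0) := by
        rw [← Finset.sum_filter, Finset.sum_const, nsmul_eq_mul, cnt]; ring
    _ ≤ _ := by
        refine Finset.sum_le_sum fun g _ => ?_
        split_ifs with hg
        · have h1 := (choose_le K hK α hα (d g) (by omega)).2
          have hgn : d g ≤ n := by
            rw [mem_antidiagonalTuple] at hd
            have := Finset.single_le_sum (f := d) (by simp) (Finset.mem_univ g)
            omega
          have h3 : la / n ≤ la / (d g : ℝ) := by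
            apply div_le_div_of_nonneg_left hl0
            · exact_mod_cast (by omega : 0 < d g)
            · exact_mod_cast hgn
          have h4 := h3.trans h1
          have h5 : (θ : ℝ) ≤ Xc 0 d := by
            have := zeros_ge d hd g
            exact_mod_cast (by omega : θ ≤ Xc 0 d)
          calc _ = θ * (Wt α d * (la / n) * f (Xc K d + 1)) := by ring
            _ ≤ _ := by gcongr
        · exact le_rfl

theorem exists_theta (K : ℕ) (hK : 0 < K) (α : ℝ) (hα : α = 1 / (K : ℝ)) :
    ∃ θ : ℕ → ℕ, Tendsto (fun n => (θ n : ℝ) / n) atTop (nhds 1) ∧ 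
      Tendsto (fun n => bad α n (θ n)) atTop (nhds 0) ∧ 
      Tendsto (fun n => bad α n (θ n + K)) atTop (nhds 0) := by
  have hα0 : 0 < α := by rw [hα]; positivity
  obtain ⟨C, hC, h⟩ := bad_bound K hK α hα
  have hinv : Tendsto (fun n : ℕ => ((n : ℝ) ^ (α / 4))⁻¹) atTop (nhds 0) :=
    ((tendsto_rpow_atTop (by positivity : 0 < α / 4)).comp tendsto_natCast_atTop_atTop).inv_tendsto_atTop
  have hn1 : Tendsto (fun n : ℕ => (n : ℝ)⁻¹) atTop (nhds 0) := tendsto_inv_atTop_nhds_zero_nat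
  let Θ : ℕ → ℕ := fun n => ⌈(1 - ((n : ℝ) ^ (α / 4))⁻¹) * n⌉₊
  have hpos : ∀ n : ℕ, 0 < n → 0 ≤ (1 - ((n : ℝ) ^ (α / 4))⁻¹) * n := by
    intro n hn
    have hn' : (1 : ℝ) ≤ n := by exact_mod_cast hn
    refine mul_nonneg ?_ (by positivity)
    rw [sub_nonneg]
    exact inv_le_one_of_one_le₀ (Real.one_le_rpow hn' (by positivity))
  have hΘ1 : ∀ n : ℕ, 0 < n → (Θ n : ℝ) ≤ (1 - ((n : ℝ) ^ (α / 4))⁻¹) * n + 1 := 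
    fun n hn => (Nat.ceil_lt_add_one (hpos n hn)).le
  have hbad : ∀ θ : ℕ → ℕ, (∀ᶠ n in atTop, θ n ≤ Θ n) → Tendsto (fun n => bad α n (θ n)) atTop (nhds 0) := by
    intro θ hθ
    have t1 : Tendsto (fun n : ℕ => 2 * (1 / 2 : ℝ) ^ n + (C * 2) * ((n : ℝ) ^ (α / 4))⁻¹) atTop (nhds 0) := by
      have a := (tendsto_pow_atTop_nhds_zero_of_lt_one (r := (1/2 : ℝ)) (by norm_num) (by norm_num)).const_mul 2
      simpa using a.add (hinv.const_mul (C * 2))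
    refine tendsto_of_tendsto_of_tendsto_of_le_of_le' tendsto_const_nhds t1 (Eventually.of_forall fun n => bad_nonneg _ _ _) ?_
    filter_upwards [hθ, eventually_gt_atTop 0] with n hn hn0
    have hn' : (1 : ℝ) ≤ n := by exact_mod_cast hn0
    have hp : 0 < (n : ℝ) ^ (α / 4) := Real.rpow_pos_of_pos (by linarith) _
    refine (h n (θ n) ((n : ℝ) ^ (α / 4))⁻¹ hn0 (by positivity) (le_trans (by exact_mod_cast hn) (hΘ1 n hn0))).trans ?_
    refine add_le_add le_rfl ?_
    have e : (n : ℝ) ^ (α / 2) = (n : ℝ) ^ (α / 4) * (n : ℝ) ^ (α / 4) := by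
      rw [← Real.rpow_add (by linarith)]; congr 1; ring
    rw [e]
    generalize (n : ℝ) ^ (α / 4) = x at *
    have : C * (n + 1) / (x⁻¹ * n) * (x * x)⁻¹ = (C * ((n + 1) / n)) * x⁻¹ := by
      field_simp
    rw [this]
    refine mul_le_mul_of_nonneg_right (mul_le_mul_of_nonneg_left ?_ hC.le) (by positivity)
    rw [div_le_iff₀ (by linarith)]; linarith
  have hΘt : Tendsto (fun n => (Θ n : ℝ) / n) atTop (nhds 1) := by
    have l1 : Tendsto (fun n : ℕ => 1 - ((n : ℝ) ^ (α / 4))⁻¹) atTop (nhds 1) := by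
      simpa using hinv.const_sub 1
    have l2 : Tendsto (fun n : ℕ => 1 - ((n : ℝ) ^ (α / 4))⁻¹ + (n : ℝ)⁻¹) atTop (nhds 1) := by
      simpa using l1.add hn1
    refine tendsto_of_tendsto_of_tendsto_of_le_of_le' l1 l2 ?_ ?_
    · filter_upwards [eventually_gt_atTop 0] with n hn
      have hn' : (0 : ℝ) < n := by exact_mod_cast hn
      rw [le_div_iff₀ hn']
      exact Nat.le_ceil _
    · filter_upwards [eventually_gt_atTop 0] with n hn
      have hn' : (0 : ℝ) < n := by exact_mod_cast hn
      rw [div_le_iff₀ hn', add_mul, inv_mul_cancel₀ hn'.ne']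
      exact hΘ1 n hn
  have hΘK : ∀ᶠ n in atTop, K ≤ Θ n := by
    have a : ∀ᶠ n in atTop, (1 / 2 : ℝ) < (Θ n : ℝ) / n := hΘt.eventually (lt_mem_nhds (by norm_num))
    filter_upwards [a, eventually_ge_atTop (2 * K), eventually_gt_atTop 0] with n h1 h2 h3
    have hn' : (0 : ℝ) < n := by exact_mod_cast h3
    rw [lt_div_iff₀ hn'] at h1
    have : ((2 * K : ℕ) : ℝ) ≤ n := by exact_mod_cast h2
    push_cast at this
    have : (K : ℝ) ≤ Θ n := by linarith
    exact_mod_cast this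
  refine ⟨fun n => Θ n - K, ?_, hbad _ (Eventually.of_forall fun n => Nat.sub_le _ _), hbad _ ?_⟩
  · have := hΘt.sub (hn1.const_mul (K : ℝ))
    simp only [mul_zero, sub_zero] at this
    refine this.congr' ?_
    filter_upwards [hΘK] with n hn
    rw [Nat.cast_sub hn]; ring
  · filter_upwards [hΘK] with n hn
    omega

noncomputable def Ex (K : ℕ) (α : ℝ) (n : ℕ) (h : ℕ → ℝ) : ℝ := (∑ d ∈ Om n, Wt α d * h (Xc K d)) / Zt α n

theorem Ex_mono (K : ℕ) (α : ℝ) (n : ℕ) {h h' : ℕ → ℝ} (hh : ∀ x, h x ≤ h' x) : Ex K α n h ≤ Ex K α n h' :=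
  div_le_div_of_nonneg_right (Finset.sum_le_sum fun d _ => mul_le_mul_of_nonneg_left (hh _) (Wt_pos α d).le) (Zt_pos α n).le

theorem Ex_const (K : ℕ) (α : ℝ) (n : ℕ) (c : ℝ) : Ex K α n (fun _ => c) = c := by
  rw [Ex, ← Finset.sum_mul, ← Zt, mul_comm, mul_div_assoc, div_self (Zt_pos α n).ne', mul_one]

theorem Ex_nonneg (K : ℕ) (α : ℝ) (n : ℕ) {h : ℕ → ℝ} (hh : ∀ x, 0 ≤ h x) : 0 ≤ Ex K α n h := by
  have := Ex_mono K α n (h := fun _ => 0) hh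
  rwa [Ex_const] at this

theorem Ex_le_one (K : ℕ) (α : ℝ) (n : ℕ) {h : ℕ → ℝ} (hh : ∀ x, h x ≤ 1) : Ex K α n h ≤ 1 := by
  have := Ex_mono K α n (h' := fun _ => 1) hh
  rwa [Ex_const] at this

theorem Ex_mul (K : ℕ) (α : ℝ) (n : ℕ) (c : ℝ) (h : ℕ → ℝ) : Ex K α n (fun x => c * h x) = c * Ex K α n h := by
  rw [Ex, Ex, ← mul_div_assoc, Finset.mul_sum]
  congr 1
  exact Finset.sum_congr rfl fun d _ => by ring

theorem Ex_add (K : ℕ) (α : ℝ) (n : ℕ) (h h' : ℕ → ℝ) : Ex K α n (fun x => h x + h' x) = Ex K α n h + Ex K α n h' := by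
  rw [Ex, Ex, Ex, ← add_div, ← Finset.sum_add_distrib]
  congr 1
  exact Finset.sum_congr rfl fun d _ => by ring

theorem cnt_pos_of {n θ : ℕ} (d : Fin (n+1) → ℕ) : (∀ g, d g < θ) ∨ 1 ≤ cnt θ d := by
  by_cases h : ∀ g, d g < θ
  · exact Or.inl h
  · right
    push Not at h
    obtain ⟨g, hg⟩ := h
    exact Finset.card_pos.mpr ⟨g, by simp [hg]⟩

open Classical in
theorem cnt_bad (α : ℝ) (n θ : ℕ) (φ : (Fin (n+1) → ℕ) → ℝ) (h1 : ∀ d, φ d ≤ 1) (h0 : ∀ d, 0 ≤ φ d) :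
    (∑ d ∈ Om n, Wt α d * φ d) / Zt α n - bad α n θ ≤ (∑ d ∈ Om n, (cnt θ d : ℝ) * (Wt α d * φ d)) / Zt α n := by
  rw [bad, ← sub_div, Finset.sum_filter, ← Finset.sum_sub_distrib]
  refine div_le_div_of_nonneg_right (Finset.sum_le_sum fun d _ => ?_) (Zt_pos α n).le
  have hW := Wt_pos α d
  have h := mul_le_mul_of_nonneg_left (h1 d) hW.le
  have h' := mul_nonneg hW.le (h0 d)
  rcases cnt_pos_of (θ := θ) d with hd | hd
  · rw [if_pos hd]
    have : 0 ≤ (cnt θ d : ℝ) * (Wt α d * φ d) := by positivity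
    linarith
  · have hd' : (1 : ℝ) ≤ cnt θ d := by exact_mod_cast hd
    have : 0 ≤ if ∀ g, d g < θ then Wt α d else 0 := by
      split_ifs
      · exact hW.le
      · exact le_rfl
    nlinarith

theorem upperE (K : ℕ) (hK : 0 < K) (α : ℝ) (hα : α = 1 / (K : ℝ)) (n θ : ℕ) (hθ : K < θ) (h2 : n < 2 * θ) 
    (h : ℕ → ℝ) (hf : ∀ x, 0 ≤ h x) (hf1 : ∀ x, h x ≤ 1) (hf0 : h 0 = 0) :
    Ex K α n h - bad α n θ ≤ (K.factorial : ℝ) ^ α * ((n + 1) / θ) * Ex K α n (fun x => h (x + 1) / (x + 1 : ℝ)) := by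
  refine (cnt_bad α n θ (fun d => h (Xc K d)) (fun d => hf1 _) (fun d => hf _)).trans ?_
  have := upper K hK α hα n θ hθ h2 (fun x => h x / x) (fun x => div_nonneg (hf x) (by positivity))
  rw [Ex, ← mul_div_assoc]
  refine div_le_div_of_nonneg_right ?_ (Zt_pos α n).le
  push_cast at this
  refine le_trans (le_of_eq ?_) this
  refine Finset.sum_congr rfl fun d _ => ?_
  rcases Nat.eq_zero_or_pos (Xc K d) with h' | h'
  · simp [h', hf0]
  · have : (Xc K d : ℝ) ≠ 0 := by positivity
    field_simp

theorem lowerE (K : ℕ) (hK : 0 < K) (α : ℝ) (hα : α = 1 / (K : ℝ)) (n θ : ℕ) (hθ : K < θ) (h2 : n < 2 * θ) 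
    (h : ℕ → ℝ) (hf : ∀ x, 0 ≤ h x) (hf1 : ∀ x, h x ≤ 1) :
    (K.factorial : ℝ) ^ α * (θ / n) * (Ex K α n (fun x => h (x + 1) / (x + 1 : ℝ)) - bad α n (θ + K)) ≤ Ex K α n h := by
  have a1 := cnt_bad α n (θ + K) (fun d => h (Xc K d + 1) / (Xc K d + 1 : ℝ)) 
    (fun d => by
      rw [div_le_one (by positivity)]
      have : (0:ℝ) ≤ Xc K d := by positivity
      linarith [hf1 (Xc K d + 1)]) (fun d => div_nonneg (hf _) (by positivity))
  refine (mul_le_mul_of_nonneg_left a1 (by positivity)).trans ?_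
  have := lower K hK α hα n θ hθ (fun x => h x / x) (fun x => div_nonneg (hf x) (by positivity))
  push_cast at this
  rw [Ex, ← mul_div_assoc]
  refine div_le_div_of_nonneg_right (this.trans ?_) (Zt_pos α n).le
  refine Finset.sum_le_sum fun d hd => ?_
  have hc : (cnt θ d : ℝ) ≤ 1 := by exact_mod_cast cnt_le h2 d hd
  have hW := Wt_pos α d
  have hh := hf (Xc K d)
  rcases Nat.eq_zero_or_pos (Xc K d) with h' | h'
  · rw [h']
    simp
    exact mul_nonneg hW.le (hf 0)
  · have h3 : (Xc K d : ℝ) ≠ 0 := by positivity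
    have : (Xc K d : ℝ) * (Wt α d * (h (Xc K d) / Xc K d)) = Wt α d * h (Xc K d) := by field_simp
    rw [this]
    have := mul_nonneg hW.le hh
    nlinarith

theorem abs_lim (p T : ℕ → ℕ → ℝ) (l : ℝ) (hl : 0 ≤ l) (hp0 : ∀ n m, 0 ≤ p n m) (hp1 : ∀ n m, p n m ≤ 1)
    (hsum : ∀ n M, ∑ m ∈ Finset.range (M + 1), p n m + T n M = 1)
    (hT : ∀ M : ℕ, ∀ᶠ n in atTop, |T n M| ≤ (2 * l + 1) / (M + 1))
    (hrec : ∀ m : ℕ, Tendsto (fun n => p n (m + 1) - l / (m + 1) * p n m) atTop (nhds 0)) (m : ℕ) :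
    Tendsto (fun n => p n m) atTop (nhds (Real.exp (-l) * l ^ m / m.factorial)) := by
  have h1 : ∀ m : ℕ, Tendsto (fun n => p n m - l ^ m / m.factorial * p n 0) atTop (nhds 0) := by
    intro m
    induction m with
    | zero => simp
    | succ m ih =>
      have := (hrec m).add (ih.const_mul (l / (m + 1)))
      simp only [mul_zero, add_zero] at this
      refine this.congr fun n => ?_
      rw [Nat.factorial_succ]
      push_cast
      have : (m.factorial : ℝ) ≠ 0 := by exact_mod_cast Nat.factorial_ne_zero m
      field_simp
      ring
  have hS : Tendsto (fun M => ∑ m ∈ Finset.range (M + 1), l ^ m / m.factorial) atTop (nhds (Real.exp l)) := by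
    have := (NormedSpace.expSeries_div_hasSum_exp l).tendsto_sum_nat
    rw [← Real.exp_eq_exp_ℝ] at this
    exact this.comp (tendsto_add_atTop_nat 1)
  have h0 : Tendsto (fun n => Real.exp l * p n 0) atTop (nhds 1) := by
    rw [Metric.tendsto_atTop']
    intro η hη
    have hM1 : Tendsto (fun M : ℕ => (2 * l + 1) / ((M : ℝ) + 1)) atTop (nhds 0) := by
      have := (tendsto_one_div_add_atTop_nhds_zero_nat (𝕜 := ℝ)).const_mul (2 * l + 1)
      simp only [mul_zero] at this
      exact this.congr fun M => by ring
    obtain ⟨M, hMa, hMb⟩ := ((Metric.tendsto_nhds.mp hS (η / 3) (by positivity)).and (hM1.eventually (gt_mem_nhds (by positivity : (0:ℝ) < η / 3)))).exists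
    have h2 : Tendsto (fun n => ∑ m ∈ Finset.range (M + 1), (p n m - l ^ m / m.factorial * p n 0)) atTop (nhds 0) := by
      have := tendsto_finsetSum (Finset.range (M + 1)) (fun m _ => h1 m)
      simpa using this
    have h3 := Metric.tendsto_nhds.mp h2 (η / 3) (by positivity)
    have h4 := h3.and (hT M)
    obtain ⟨n0, hn0⟩ := eventually_atTop.mp h4
    refine ⟨n0, fun n hn => ?_⟩
    obtain ⟨h5, h6⟩ := hn0 n hn.le
    rw [Real.dist_eq] at h5 hMa ⊢
    rw [Finset.sum_sub_distrib, ← Finset.sum_mul] at h5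
    have h7 := hsum n M
    set S := ∑ m ∈ Finset.range (M + 1), l ^ m / m.factorial
    set Q := ∑ m ∈ Finset.range (M + 1), p n m
    have h8 : |(S - Real.exp l) * p n 0| ≤ |S - Real.exp l| := by
      rw [abs_mul, abs_of_nonneg (hp0 n 0)]
      exact mul_le_of_le_one_right (abs_nonneg _) (hp1 n 0)
    have h9 : Real.exp l * p n 0 - 1 = - ((S - Real.exp l) * p n 0) - (Q - S * p n 0 - 0) - T n M := by
      rw [← h7]; ring
    rw [abs_lt]
    rw [abs_lt] at h5 hMa
    have h8' := h8.trans_lt (abs_lt.mpr hMa)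
    rw [abs_lt] at h8'
    rw [abs_le] at h6
    rw [h9]
    constructor <;> linarith [h5.1, h5.2, h8'.1, h8'.2, h6.1, h6.2]
  have h00 : Tendsto (fun n => p n 0) atTop (nhds (Real.exp (-l))) := by
    have := h0.const_mul (Real.exp (-l))
    rw [mul_one] at this
    refine this.congr fun n => ?_
    rw [← mul_assoc, ← Real.exp_add]; simp
  have := (h1 m).add (h00.const_mul (l ^ m / m.factorial))
  rw [zero_add] at this
  have e : Real.exp (-l) * l ^ m / m.factorial = l ^ m / m.factorial * Real.exp (-l) := by ring
  rw [e]
  exact this.congr fun n => by ring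

theorem nu_eq (K : ℕ) (α : ℝ) (n m : ℕ) :
    nu (fun n => ((n - 1).factorial : ℝ) ^ α) (n + 1) (fun t => t.countOutdeg K = m) = 
      Ex K α n (fun x => if x = m then 1 else 0) := by
  have h1 := tree_sum n (fun n => ((n - 1).factorial : ℝ) ^ α) K (fun x => x = m)
  have h2 := tree_sum n (fun n => ((n - 1).factorial : ℝ) ^ α) K (fun _ => True)
  have hn : (n + 1 : ℝ) ≠ 0 := by positivity
  have hz : Zfun (fun n => ((n - 1).factorial : ℝ) ^ α) (n + 1) = 
      ∑' t : {t : PTree // t.size = n + 1 ∧ True}, t.1.weight (fun n => ((n - 1).factorial : ℝ) ^ α) := by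
    rw [Zfun]
    exact Equiv.tsum_eq (Equiv.subtypeEquivRight (p := fun t : PTree => t.size = n + 1) (q := fun t => t.size = n + 1 ∧ True) (fun t => by simp)) (fun t : {t : PTree // t.size = n + 1 ∧ True} => t.1.weight (fun n => ((n - 1).factorial : ℝ) ^ α))
  rw [nu, hz, ← mul_div_mul_left _ _ hn, h1, h2, Ex, Zt]
  simp only [Finset.filter_true, Nat.add_sub_cancel, Finset.sum_filter, mul_ite, mul_one, mul_zero]
  rfl

theorem hrec_main (K : ℕ) (hK : 0 < K) (α : ℝ) (hα : α = 1 / (K : ℝ)) : 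
    (∀ m : ℕ, Tendsto (fun n => Ex K α n (fun x => if x = m + 1 then 1 else 0) - (K.factorial : ℝ) ^ α / (m + 1) * Ex K α n (fun x => if x = m then 1 else 0)) atTop (nhds 0)) ∧ 
    (∀ M : ℕ, ∀ᶠ n in atTop, |Ex K α n (fun x => if M < x then 1 else 0)| ≤ (2 * (K.factorial : ℝ) ^ α + 1) / (M + 1)) := by
  obtain ⟨θ, t1, t2, t3⟩ := exists_theta K hK α hα
  set l := (K.factorial : ℝ) ^ α with hl
  have hl0 : 0 ≤ l := by positivity
  have hn1 : Tendsto (fun n : ℕ => (n : ℝ)⁻¹) atTop (nhds 0) := tendsto_inv_atTop_nhds_zero_nat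
  have hgood : ∀ᶠ n in atTop, K < θ n ∧ n < 2 * θ n := by
    have a : ∀ᶠ n in atTop, (1 / 2 : ℝ) < (θ n : ℝ) / n := t1.eventually (lt_mem_nhds (by norm_num))
    filter_upwards [a, eventually_ge_atTop (2 * K), eventually_gt_atTop 0] with n h1 h2 h3
    have hn' : (0 : ℝ) < n := by exact_mod_cast h3
    rw [lt_div_iff₀ hn'] at h1
    have : (n : ℝ) < ((2 * θ n : ℕ) : ℝ) := by push_cast; linarith
    have : n < 2 * θ n := by exact_mod_cast this
    omega
  have t4 : Tendsto (fun n : ℕ => ((n : ℝ) + 1) / θ n) atTop (nhds 1) := by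
    have a := (hn1.const_add 1).div t1 (by norm_num)
    simp only [add_zero, div_one] at a
    refine a.congr' ?_
    filter_upwards [hgood, eventually_gt_atTop 0] with n h1 h2
    have hn' : (n : ℝ) ≠ 0 := by positivity
    have : (θ n : ℝ) ≠ 0 := by exact_mod_cast (by omega : θ n ≠ 0)
    simp only [Pi.div_apply]
    field_simp
  constructor
  · intro m
    have lo : Tendsto (fun n => (-|(θ n : ℝ) / n - 1| * l - l * ((θ n : ℝ) / n) * bad α n (θ n + K))) atTop (nhds 0) := by
      have a := (t1.sub_const 1).abs.neg.mul_const l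
      have b := (t1.const_mul l).mul t3
      simpa using a.sub b
    have hi : Tendsto (fun n : ℕ => |((n : ℝ) + 1) / θ n - 1| * l + bad α n (θ n)) atTop (nhds 0) := by
      have a := (t4.sub_const 1).abs.mul_const l
      simpa using a.add t2
    have hE : ∀ n, Ex K α n (fun x => (if x + 1 = m + 1 then (1:ℝ) else 0) / (x + 1 : ℝ)) = 
        (1 / (m + 1 : ℝ)) * Ex K α n (fun x => if x = m then 1 else 0) := by
      intro n
      rw [← Ex_mul]
      congr 1
      ext x
      by_cases h : x = m <;> simp [h]
    have hb : ∀ n, 0 ≤ (1 / (m + 1 : ℝ)) * Ex K α n (fun x => if x = m then 1 else 0) ∧ (1 / (m + 1 : ℝ)) * Ex K α n (fun x => if x = m then 1 else 0) ≤ 1 := by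
      intro n
      have a : 0 ≤ Ex K α n (fun x => if x = m then 1 else 0) := by
        exact Ex_nonneg K α n fun x => by split_ifs <;> norm_num
      have b : Ex K α n (fun x => if x = m then 1 else 0) ≤ 1 := by
        exact Ex_le_one K α n fun x => by split_ifs <;> norm_num
      have c : 1 / (m + 1 : ℝ) ≤ 1 := by 
        rw [div_le_one (by positivity)]; linarith [(Nat.cast_nonneg m : (0:ℝ) ≤ m)]
      exact ⟨by positivity, mul_le_one₀ c a b⟩
    refine tendsto_of_tendsto_of_tendsto_of_le_of_le' lo hi ?_ ?_
    · filter_upwards [hgood] with n hn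
      have := lowerE K hK α hα n (θ n) hn.1 hn.2 (fun x => if x = m + 1 then 1 else 0)
        (fun x => by split_ifs <;> norm_num) (fun x => by split_ifs <;> norm_num)
      rw [hE, ← hl] at this
      obtain ⟨b0, b1⟩ := hb n
      set y := (1 / (m + 1 : ℝ)) * Ex K α n (fun x => if x = m then 1 else 0) with hy
      have e : l / (m + 1) * Ex K α n (fun x => if x = m then 1 else 0) = l * y := by rw [hy]; ring
      rw [e]
      have h1 : -|(θ n : ℝ) / n - 1| ≤ ((θ n : ℝ) / n - 1) * y := by
        have := neg_abs_le ((θ n : ℝ) / n - 1)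
        have := abs_nonneg ((θ n : ℝ) / n - 1)
        nlinarith
      have := mul_le_mul_of_nonneg_right h1 hl0
      nlinarith
    · filter_upwards [hgood] with n hn
      have := upperE K hK α hα n (θ n) hn.1 hn.2 (fun x => if x = m + 1 then 1 else 0)
        (fun x => by split_ifs <;> norm_num) (fun x => by split_ifs <;> norm_num) (by simp)
      rw [hE, ← hl] at this
      obtain ⟨b0, b1⟩ := hb n
      set y := (1 / (m + 1 : ℝ)) * Ex K α n (fun x => if x = m then 1 else 0) with hy
      have e : l / (m + 1) * Ex K α n (fun x => if x = m then 1 else 0) = l * y := by rw [hy]; ring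
      rw [e]
      have h1 : ((n + 1 : ℝ) / θ n - 1) * y ≤ |(n + 1 : ℝ) / θ n - 1| := by
        have := le_abs_self ((n + 1 : ℝ) / θ n - 1)
        have := abs_nonneg ((n + 1 : ℝ) / θ n - 1)
        nlinarith
      have := mul_le_mul_of_nonneg_right h1 hl0
      nlinarith
  · intro M
    have b1 := t2.eventually (gt_mem_nhds (by positivity : (0:ℝ) < 1 / (M + 1)))
    have b2 := t4.eventually (gt_mem_nhds (by norm_num : (1:ℝ) < 2))
    filter_upwards [hgood, b1, b2] with n hn h1 h2
    have a : 0 ≤ Ex K α n (fun x => if M < x then 1 else 0) := by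
      exact Ex_nonneg K α n fun x => by split_ifs <;> norm_num
    rw [abs_of_nonneg a]
    have := upperE K hK α hα n (θ n) hn.1 hn.2 (fun x => if M < x then 1 else 0)
        (fun x => by split_ifs <;> norm_num) (fun x => by split_ifs <;> norm_num) (by simp)
    have h3 : Ex K α n (fun x => (if M < x + 1 then (1:ℝ) else 0) / (x + 1 : ℝ)) ≤ 1 / (M + 1) := by
      rw [← Ex_const K α n (1 / (M + 1))]
      refine Ex_mono K α n fun x => ?_
      split_ifs with h
      · have : (M : ℝ) ≤ x := by exact_mod_cast (by omega : M ≤ x)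
        gcongr
      · rw [zero_div]; positivity
    have h4 : l * ((n + 1 : ℝ) / θ n) * Ex K α n (fun x => (if M < x + 1 then (1:ℝ) else 0) / (x + 1 : ℝ)) ≤ l * 2 * (1 / (M + 1)) := by
      have : (0:ℝ) ≤ (n + 1 : ℝ) / θ n := by positivity
      exact mul_le_mul (mul_le_mul_of_nonneg_left h2.le hl0) h3 (by
        exact Ex_nonneg K α n fun x => div_nonneg (by split_ifs <;> norm_num) (by positivity)) (by positivity)
    calc _ ≤ l * 2 * (1 / (M + 1)) + 1 / (M + 1) := by linarith
      _ = _ := by ring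

/-- Theorem 3 (iv), case `i = K = 1/α` an integer: `X_{K+1,N} →d Poisson((K!)^α)`. -/
theorem stmt_15 (K : ℕ) (hK : 2 ≤ K) (α : ℝ) (hα : α = 1 / (K : ℝ)) :
    ∀ m : ℕ, Tendsto (fun N : ℕ =>
        nu (fun n => ((n - 1).factorial : ℝ) ^ α) N (fun t => t.countOutdeg K = m))
      atTop (nhds (Real.exp (-((K.factorial : ℝ) ^ α)) * ((K.factorial : ℝ) ^ α) ^ m /
        m.factorial)) := by
  intro m
  rw [← tendsto_add_atTop_iff_nat 1]
  simp only [nu_eq]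
  obtain ⟨h1, h2⟩ := hrec_main K (by omega) α hα
  refine abs_lim (fun n m => Ex K α n (fun x => if x = m then 1 else 0))
    (fun n M => Ex K α n (fun x => if M < x then 1 else 0)) _ (by positivity) ?_ ?_ ?_ h2 h1 m
  · intro n m
    exact Ex_nonneg K α n fun x => by split_ifs <;> norm_num
  · intro n m
    exact Ex_le_one K α n fun x => by split_ifs <;> norm_num
  · intro n M
    have e : ∀ M, ∑ m ∈ Finset.range M, Ex K α n (fun x => if x = m then 1 else 0) =
        Ex K α n (fun x => if x < M then 1 else 0) := by
      intro M
      induction M with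
      | zero => simp [Ex]
      | succ M ih =>
        rw [Finset.sum_range_succ, ih, ← Ex_add]
        congr 1
        ext x
        rcases lt_trichotomy x M with h | h | h
        · simp [h, h.ne, h.trans (Nat.lt_succ_self M)]
        · simp [h]
        · rw [if_neg (by omega), if_neg (by omega), if_neg (by omega)]; simp
    rw [e, ← Ex_add]
    refine Eq.trans ?_ (Ex_const K α n 1)
    congr 1
    ext x
    by_cases h : x < M + 1
    · rw [if_pos h, if_neg (by omega)]; simp
    · rw [if_neg h, if_pos (by omega)]; simp
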